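/- arXiv:2012.13655 — 2 statements merged into one kernel-verified Lean document; each statement's English description precedes it below -/
import Mathlib

section
/- Let k₁, …, k_N ≥ 2 be integers with N ≥ 2. Then w = a₁^{k₁} ⋯ a_N^{k_N} is not simple in F_N = F(a₁, …, a_N); that is, w does not lie in any proper free factor of F_N. In particular w is not primitive. -/
noncomputable section

abbrev F2 := FreeGroup (Fin 2)

def a : F2 := FreeGroup.of 0
def b : F2 := FreeGroup.of 1

/-- An element of a group is primitive if it belongs to some free basis of the group. -/
def Primitive {G : Type*} [Group G] (g : G) : Prop :=
  ∃ (ι : Type) (bas : FreeGroupBasis ι G) (i : ι), bas i = g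

/-- An element of a group is simple if it lies in a proper free factor, i.e. there is a
free product decomposition `G = A ∗ B` with `A`, `B` nontrivial and `g ∈ A`. -/
def SimpleElem {G : Type*} [Group G] (g : G) : Prop :=
  ∃ A B : Subgroup G, A ≠ ⊥ ∧ B ≠ ⊥ ∧ g ∈ A ∧
    Function.Bijective (Monoid.Coprod.lift A.subtype B.subtype)

/-- The primitivity index: the smallest (finite) index of a subgroup `H ≤ F₂` containing `g`
in which `g` is primitive. -/
def dPrim (g : F2) : ℕ :=
  sInf {n : ℕ | 0 < n ∧ ∃ H : Subgroup F2, H.index = n ∧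
    ∃ hg : g ∈ H, Primitive (⟨g, hg⟩ : H)}

/-- The simplicity index: the smallest (finite) index of a subgroup `H ≤ F₂` containing `g`
in which `g` is simple. -/
def dSimp (g : F2) : ℕ :=
  sInf {n : ℕ | 0 < n ∧ ∃ H : Subgroup F2, H.index = n ∧
    ∃ hg : g ∈ H, SimpleElem (⟨g, hg⟩ : H)}

/-- `smallestNonDivisor n` is the smallest integer `d ≥ 2` with `d ∤ n`. -/
def smallestNonDivisor (n : ℕ) : ℕ := sInf {d : ℕ | 2 ≤ d ∧ ¬ d ∣ n}

/-- The action of `φ : G →* (K ≃ᵃ[K] K)` on the affine line has the character `ψ : G →* Kˣ` as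
its linear part. -/
def LiesOver {G K : Type*} [Group G] [Field K] (φ : G →* (K ≃ᵃ[K] K)) (ψ : G →* Kˣ) : Prop :=
  AffineEquiv.linearHom.comp φ = (DistribMulAction.toModuleAut K K).comp ψ

/-- Every affine action on the line with linear part `ψ` kills `w`. -/
def KilledOver {G K : Type*} [Group G] [Field K] (w : G) (ψ : G →* Kˣ) : Prop :=
  ∀ φ : G →* (K ≃ᵃ[K] K), LiesOver φ ψ → φ w = 1

section AffineActions

variable {G K : Type*} [Group G] [Field K]

theorem LiesOver.linear_apply {φ : G →* (K ≃ᵃ[K] K)} {ψ : G →* Kˣ} (h : LiesOver φ ψ)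
    (x : G) (z : K) : (φ x).linear z = ψ x * z :=
  congrArg (fun e : K ≃ₗ[K] K => e z) (DFunLike.congr_fun h x)

theorem LiesOver.sub_eq {φ : G →* (K ≃ᵃ[K] K)} {ψ : G →* Kˣ} (h : LiesOver φ ψ)
    (x : G) (z z' : K) : φ x z - φ x z' = ψ x * (z - z') := by
  have h₁ := (φ x).map_vadd z' (z - z')
  simp only [vadd_eq_add, sub_add_cancel, h.linear_apply] at h₁
  rw [h₁, add_sub_cancel_right]

/-- Affine maps with nontrivial linear part have a fixed point. -/
theorem LiesOver.exists_fixed {φ : G →* (K ≃ᵃ[K] K)} {ψ : G →* Kˣ} (h : LiesOver φ ψ)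
    {x : G} (hx : ψ x ≠ 1) : ∃ p, φ x p = p := by
  have hc : (1 - ψ x : K) ≠ 0 := sub_ne_zero.2 fun h' => hx (Units.ext h'.symm)
  refine ⟨φ x 0 / (1 - ψ x), ?_⟩
  have h₁ := h.sub_eq x (φ x 0 / (1 - ψ x)) 0
  rw [sub_zero, sub_eq_iff_eq_add] at h₁
  rw [h₁]
  field_simp
  ring

theorem pow_apply_of_fixed {e : K ≃ᵃ[K] K} {p : K} (h : e p = p) (n : ℕ) : (e ^ n) p = p := by
  induction n with
  | zero => rfl
  | succ n ih => rw [pow_succ, AffineEquiv.coe_mul, Function.comp_apply, h, ih]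

/-- The affine map `z ↦ c * z + v`. -/
def affineOfCoeffs (c : Kˣ) (v : K) : K ≃ᵃ[K] K :=
  AffineEquiv.constVAdd K K v * (DistribMulAction.toModuleAut K K c).toAffineEquiv

theorem affineOfCoeffs_apply (c : Kˣ) (v z : K) : affineOfCoeffs c v z = v + c * z := rfl

/-- The linear action on the line given by a character. -/
def linearAction (ψ : G →* Kˣ) : G →* (K ≃ᵃ[K] K) where
  toFun x := affineOfCoeffs (ψ x) 0
  map_one' := by ext z; simp [affineOfCoeffs_apply]
  map_mul' x y := by ext z; simp [affineOfCoeffs_apply, mul_assoc]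

/-- A free group acts on the line with any prescribed linear part and translation vectors. -/
theorem FreeGroupBasis.exists_liesOver {ι : Type*} (bas : FreeGroupBasis ι G) (ψ : G →* Kˣ)
    (v : ι → K) : ∃ φ : G →* (K ≃ᵃ[K] K), LiesOver φ ψ ∧
      ∀ i, φ (bas i) = affineOfCoeffs (ψ (bas i)) (v i) := by
  have h (i : ι) : bas.lift (fun i => affineOfCoeffs (ψ (bas i)) (v i)) (bas i) =
      affineOfCoeffs (ψ (bas i)) (v i) :=
    congrFun (bas.lift.symm_apply_apply _) i
  refine ⟨_, bas.ext_hom _ _ fun i => ?_, h⟩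
  rw [MonoidHom.comp_apply, h]
  rfl

theorem Primitive.not_killedOver {w : G} (hw : Primitive w) (ψ : G →* Kˣ) :
    ¬ KilledOver w ψ := by
  obtain ⟨ι, bas, i, rfl⟩ := hw
  obtain ⟨φ, hφ, hv⟩ := bas.exists_liesOver ψ (fun _ => 1)
  intro h
  have h₁ := DFunLike.congr_fun (h φ hφ) (0 : K)
  simp [hv, affineOfCoeffs_apply] at h₁

end AffineActions

section FreeFactors

variable {G : Type*} [Group G] {A B : Subgroup G}

theorem exists_hom_of_bijective_coprodLift
    (h : Function.Bijective (Monoid.Coprod.lift A.subtype B.subtype)) {H : Type*} [Group H]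
    (f : A →* H) (g : B →* H) :
    ∃ φ : G →* H, φ.comp A.subtype = f ∧ φ.comp B.subtype = g := by
  let e := MulEquiv.ofBijective _ h
  have hA (x : A) : e.symm (x : G) = Monoid.Coprod.inl x := by
    rw [MulEquiv.symm_apply_eq]
    exact (Monoid.Coprod.lift_apply_inl A.subtype B.subtype x).symm
  have hB (x : B) : e.symm (x : G) = Monoid.Coprod.inr x := by
    rw [MulEquiv.symm_apply_eq]
    exact (Monoid.Coprod.lift_apply_inr A.subtype B.subtype x).symm
  refine ⟨(Monoid.Coprod.lift f g).comp e.symm.toMonoidHom, ?_, ?_⟩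
  · ext x
    simp [hA]
  · ext x
    simp [hB]

theorem hom_ext_of_bijective_coprodLift
    (h : Function.Bijective (Monoid.Coprod.lift A.subtype B.subtype)) {H : Type*} [Group H]
    {f g : G →* H} (hA : f.comp A.subtype = g.comp A.subtype)
    (hB : f.comp B.subtype = g.comp B.subtype) : f = g := by
  rw [← MonoidHom.cancel_right h.surjective]
  exact Monoid.Coprod.hom_ext
    (by rw [MonoidHom.comp_assoc, MonoidHom.comp_assoc, Monoid.Coprod.lift_comp_inl, hA])
    (by rw [MonoidHom.comp_assoc, MonoidHom.comp_assoc, Monoid.Coprod.lift_comp_inr, hB])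

/-- Whether `w` in the free factor `A` is killed by all affine actions with linear part `ψ`
depends only on the restriction of `ψ` to `A`. -/
theorem KilledOver.of_comp_subtype_eq {K : Type*} [Field K]
    (h : Function.Bijective (Monoid.Coprod.lift A.subtype B.subtype)) {w : G} (hw : w ∈ A)
    {ψ ψ' : G →* Kˣ} (hψ : ψ'.comp A.subtype = ψ.comp A.subtype) (hK : KilledOver w ψ) :
    KilledOver w ψ' := by
  intro φ' hφ'
  obtain ⟨φ, hA, hB⟩ := exists_hom_of_bijective_coprodLift h (φ'.comp A.subtype)
    (linearAction (ψ.comp B.subtype))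
  have hφ : LiesOver φ ψ := by
    refine hom_ext_of_bijective_coprodLift h ?_ ?_
    · rw [MonoidHom.comp_assoc, hA, MonoidHom.comp_assoc, ← hψ, ← MonoidHom.comp_assoc, hφ',
        MonoidHom.comp_assoc]
    · rw [MonoidHom.comp_assoc, hB]
      rfl
  rw [← hK φ hφ]
  exact (DFunLike.congr_fun hA ⟨w, hw⟩).symm

end FreeFactors

section ProductsOfPowers

variable {ι K : Type*} [Field K]

theorem killedOver_prod_powers (l : List ι) (k : ι → ℕ) {ψ : FreeGroup ι →* Kˣ}
    (h₁ : ∀ i, ψ (FreeGroup.of i) ≠ 1) (hk : ∀ i, ψ (FreeGroup.of i) ^ k i = 1) :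
    KilledOver (l.map fun i => FreeGroup.of i ^ k i).prod ψ := by
  intro φ hφ
  rw [map_list_prod, List.map_map]
  refine List.prod_eq_one fun x hx => ?_
  obtain ⟨i, -, rfl⟩ := List.mem_map.1 hx
  obtain ⟨p, hp⟩ := hφ.exists_fixed (h₁ i)
  have hp' := pow_apply_of_fixed hp (k i)
  rw [← map_pow] at hp'
  ext z
  have h := hφ.sub_eq (FreeGroup.of i ^ k i) z p
  rw [map_pow ψ, hk, hp', Units.val_one, one_mul] at h
  simpa using h

theorem KilledOver.pow_eq_one {l : List ι} (hl : l.Nodup) {i : ι} (hi : i ∈ l) {k : ι → ℕ}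
    {ψ : FreeGroup ι →* Kˣ} (h : KilledOver (l.map fun i => FreeGroup.of i ^ k i).prod ψ) :
    ψ (FreeGroup.of i) ^ k i = 1 := by
  classical
  by_cases h₁ : ψ (FreeGroup.of i) = 1
  · rw [h₁, one_pow]
  obtain ⟨φ, hφ, hv⟩ :=
    (FreeGroupBasis.ofFreeGroup ι).exists_liesOver ψ (Pi.single i (1 : K))
  simp only [FreeGroupBasis.ofFreeGroup_apply] at hv
  obtain ⟨s, t, rfl⟩ := List.append_of_mem hi
  let S : Subgroup (K ≃ᵃ[K] K) :=
    { carrier := {e | e 0 = 0}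
      mul_mem' := fun {e e'} he he' => (congrArg e he').trans he
      one_mem' := rfl
      inv_mem' := fun {e} he => e.symm_apply_eq.2 (Eq.symm he) }
  have hfix (r : List ι) (hr : i ∉ r) :
      φ (r.map fun i => FreeGroup.of i ^ k i).prod ∈ S := by
    rw [map_list_prod, List.map_map]
    refine S.list_prod_mem fun x hx => ?_
    obtain ⟨j, hj, rfl⟩ := List.mem_map.1 hx
    have hji : j ≠ i := fun h => hr (h ▸ hj)
    rw [Function.comp_apply, map_pow]
    refine S.pow_mem ?_ _
    change φ (FreeGroup.of j) 0 = 0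
    simp [hv, affineOfCoeffs_apply, hji]
  have hs : i ∉ s := fun hs => List.disjoint_of_nodup_append hl hs List.mem_cons_self
  have ht : i ∉ t := (List.nodup_cons.1 hl.of_append_right).1
  have hprod := h φ hφ
  rw [List.map_append, List.prod_append, List.map_cons, List.prod_cons, map_mul, map_mul] at hprod
  have hmem : φ (FreeGroup.of i ^ k i) ∈ S := by
    rw [← S.mul_mem_cancel_right (hfix t ht), ← S.mul_mem_cancel_left (hfix s hs), hprod]
    exact S.one_mem
  have h0 : φ (FreeGroup.of i ^ k i) 0 = 0 := hmem
  obtain ⟨p, hp⟩ := hφ.exists_fixed h₁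
  have hp0 : p ≠ 0 := by
    rintro rfl
    simp [hv, affineOfCoeffs_apply] at hp
  have hp' := pow_apply_of_fixed hp (k i)
  rw [← map_pow] at hp'
  have hsub := hφ.sub_eq (FreeGroup.of i ^ k i) p 0
  rw [hp', h0, sub_zero, map_pow ψ] at hsub
  exact Units.ext (mul_right_cancel₀ hp0 (hsub.symm.trans (one_mul p).symm))

end ProductsOfPowers

/-- A nontrivial free group has a character to `ℂˣ` of infinite order. -/
theorem exists_hom_pow_ne_one {G : Type*} [Group G] [IsFreeGroup G] [Nontrivial G] :
    ∃ (β : G →* ℂˣ) (x : G), ∀ n : ℕ, n ≠ 0 → β x ^ n ≠ 1 := by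
  have hne : Nonempty (IsFreeGroup.Generators G) := by
    by_contra hempty
    rw [not_nonempty_iff] at hempty
    exact not_subsingleton G (IsFreeGroup.toFreeGroup G).toEquiv.subsingleton
  obtain ⟨i⟩ := hne
  refine ⟨IsFreeGroup.lift fun _ => Units.mk0 2 two_ne_zero, IsFreeGroup.of i, fun n hn h => ?_⟩
  rw [IsFreeGroup.lift_of] at h
  have h₁ := congrArg (fun u : ℂˣ => ‖(u : ℂ)‖) h
  simp only [Units.val_pow_eq_pow_val, Units.val_mk0, norm_pow, Units.val_one, norm_one] at h₁
  exact (one_lt_pow₀ (by norm_num : (1 : ℝ) < ‖(2 : ℂ)‖) hn).ne' h₁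

theorem exists_unit_pow_eq_one {n : ℕ} (hn : 2 ≤ n) : ∃ u : ℂˣ, u ≠ 1 ∧ u ^ n = 1 := by
  have hζ := Complex.isPrimitiveRoot_exp n (by omega)
  obtain ⟨u, hu⟩ := hζ.isUnit (by omega)
  rw [← hu, IsPrimitiveRoot.coe_units_iff] at hζ
  exact ⟨u, hζ.ne_one (by omega), hζ.pow_eq_one⟩

theorem not_simple_prod_powers (N : ℕ) (hN : 2 ≤ N) (k : Fin N → ℕ) (hk : ∀ i, 2 ≤ k i) :
    ¬ SimpleElem (((List.finRange N).map (fun i => FreeGroup.of i ^ k i)).prod) ∧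
    ¬ Primitive (((List.finRange N).map (fun i => FreeGroup.of i ^ k i)).prod) := by
  choose ζ hζ hζk using fun i => exists_unit_pow_eq_one (hk i)
  have hK : KilledOver (((List.finRange N).map (fun i => FreeGroup.of i ^ k i)).prod)
      (FreeGroup.lift ζ) :=
    killedOver_prod_powers _ k (by simpa using hζ) (by simpa using hζk)
  refine ⟨?_, fun hw => hw.not_killedOver _ hK⟩
  rintro ⟨A, B, -, hB, hw, hbij⟩
  have : Nontrivial B := (Subgroup.nontrivial_iff_ne_bot B).2 hB
  obtain ⟨β, x, hx⟩ := exists_hom_pow_ne_one (G := B)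
  obtain ⟨ψ, hψA, hψB⟩ :=
    exists_hom_of_bijective_coprodLift hbij ((FreeGroup.lift ζ).comp A.subtype) β
  have hψ := hK.of_comp_subtype_eq hbij hw hψA
  have hpow : (powMonoidHom (∏ i, k i)).comp ψ = 1 := by
    ext1 i
    obtain ⟨m, hm⟩ := Finset.dvd_prod_of_mem k (Finset.mem_univ i)
    have hi := hψ.pow_eq_one (List.nodup_finRange N) (List.mem_finRange i)
    simp [hm, pow_mul, hi]
  refine hx (∏ i, k i) (Finset.prod_ne_zero_iff.2 fun i _ => by have := hk i; omega) ?_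
  rw [← hψB]
  exact DFunLike.congr_fun hpow (x : FreeGroup (Fin N))
end
end

section
/- For all integers i ≥ 3, setting n_i = lcm(1, 2, …, i), the primitivity index satisfies d_prim(a^{n_i} b^{n_i}; F₂) ≥ d(n_i) ≥ i + 1, where d(n) is the smallest integer ≥ 2 not dividing n. -/
noncomputable section

/-! ### A finite-index subgroup in which `a ^ n * b ^ n` is primitive -/

section CyclicCover

variable (n : ℕ)

/-- The hom `F₂ → ℤ/n` sending `a` to `1` and `b` to `0`. -/
def degreeHom : F2 →* Multiplicative (ZMod n) :=
  FreeGroup.lift ![Multiplicative.ofAdd 1, 1]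

/-- The free group which is to be identified with the kernel of `degreeHom n`. -/
abbrev CoverGroup := FreeGroup (Option (ZMod n))

/-- The element of `CoverGroup n` corresponding to `a ^ n`. -/
def wrap : CoverGroup n :=
  FreeGroup.of none * (FreeGroup.of (some 0) ^ n)⁻¹

/-- The label of the `a`-edge leaving the vertex `i` of the cover. -/
def edgeLabel (i : ZMod n) : CoverGroup n := if i + 1 = 0 then wrap n else 1

/-- The action of `F₂` on the `CoverGroup n`-torsor over the vertices of the cyclic cover. -/
def coverAction : F2 →* Equiv.Perm (ZMod n × CoverGroup n) :=
  FreeGroup.lift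
    ![Equiv.prodShear (Equiv.addRight 1) (fun i => Equiv.mulLeft (edgeLabel n i)),
      Equiv.prodShear (Equiv.refl _) (fun i => Equiv.mulLeft (FreeGroup.of (some i)))]

/-- The generators of the kernel of `degreeHom n`. -/
def coverGen : CoverGroup n →* F2 :=
  FreeGroup.lift fun
    | none => a ^ n * b ^ n
    | some i => (a ^ i.val)⁻¹ * b * a ^ i.val

theorem perm_apply_inv_apply {α : Type*} (σ : Equiv.Perm α) (x : α) : σ (σ⁻¹ x) = x :=
  σ.apply_symm_apply x

theorem F2.induction {P : F2 → Prop} (one : P 1) (ha : P a) (hb : P b)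
    (inv : ∀ w, P w → P w⁻¹) (mul : ∀ v w, P v → P w → P (v * w)) (w : F2) : P w := by
  have hof : ∀ s : Fin 2, P (FreeGroup.of s) := by
    intro s
    fin_cases s
    · exact ha
    · exact hb
  exact FreeGroup.induction_on w one hof (fun s hs => inv _ hs) mul

@[simp] theorem degreeHom_a : degreeHom n a = Multiplicative.ofAdd 1 := by
  simp [degreeHom, a]

@[simp] theorem degreeHom_b : degreeHom n b = 1 := by
  simp [degreeHom, b]

@[simp] theorem coverAction_a (x : ZMod n × CoverGroup n) :
    coverAction n a x = (x.1 + 1, edgeLabel n x.1 * x.2) := by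
  simp [coverAction, a]

@[simp] theorem coverAction_b (x : ZMod n × CoverGroup n) :
    coverAction n b x = (x.1, FreeGroup.of (some x.1) * x.2) := by
  simp [coverAction, b]

theorem coverAction_fst (w : F2) (x : ZMod n × CoverGroup n) :
    (coverAction n w x).1 = x.1 + (degreeHom n w).toAdd := by
  induction w using F2.induction generalizing x with
  | one => simp
  | ha => simp
  | hb => simp
  | inv w h =>
    have := h ((coverAction n w)⁻¹ x)
    simp only [perm_apply_inv_apply] at this
    simp [map_inv, this]
  | mul v w hv hw => simp [hv, hw]; ring

theorem coverAction_mul_right (w : F2) (x : ZMod n × CoverGroup n) (k : CoverGroup n) :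
    coverAction n w (x.1, x.2 * k) = ((coverAction n w x).1, (coverAction n w x).2 * k) := by
  induction w using F2.induction generalizing x with
  | one => simp
  | ha => simp [mul_assoc]
  | hb => simp [mul_assoc]
  | inv w h =>
    have := h ((coverAction n w)⁻¹ x)
    simp only [perm_apply_inv_apply] at this
    rw [map_inv, Equiv.Perm.inv_eq_iff_eq, this]
  | mul v w hv hw => simp [hv, hw]

variable {n} in
theorem edge_relation [NeZero n] (i : ZMod n) :
    a ^ (i + 1).val * coverGen n (edgeLabel n i) = a * a ^ i.val := by
  rw [← pow_succ']
  unfold edgeLabel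
  split_ifs with h
  · have hval : i.val + 1 = n := by
      have hlt := ZMod.val_lt i
      have hdvd : n ∣ i.val + 1 := by
        rw [← ZMod.natCast_eq_zero_iff]
        simpa using h
      have := Nat.le_of_dvd (Nat.succ_pos _) hdvd
      omega
    simp [h, wrap, coverGen, hval]
  · have hlt : i.val + 1 < n := by
      have hlt := ZMod.val_lt i
      by_contra hge
      have heq : i.val + 1 = n := by omega
      apply h
      have : ((i.val + 1 : ℕ) : ZMod n) = 0 := by rw [heq]; simp
      simpa using this
    have : (i + 1).val = i.val + 1 := by
      conv_lhs => rw [← ZMod.natCast_zmod_val i]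
      rw [← Nat.cast_succ, ZMod.val_natCast_of_lt hlt]
    simp [this]

theorem coverGen_coverAction [NeZero n] (w : F2) (x : ZMod n × CoverGroup n) :
    a ^ (coverAction n w x).1.val * coverGen n (coverAction n w x).2 =
      w * (a ^ x.1.val * coverGen n x.2) := by
  induction w using F2.induction generalizing x with
  | one => simp
  | ha =>
    rw [coverAction_a, map_mul, ← mul_assoc, edge_relation, mul_assoc]
  | hb => simp [coverGen, mul_assoc]
  | inv w h =>
    have := h ((coverAction n w)⁻¹ x)
    simp only [perm_apply_inv_apply] at this
    rw [this, map_inv, inv_mul_cancel_left]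
  | mul v w hv hw => simp [hv, hw, mul_assoc]

theorem coverAction_a_pow {j : ℕ} (hj : j < n) (k : CoverGroup n) :
    coverAction n (a ^ j) (0, k) = ((j : ZMod n), k) := by
  induction j with
  | zero => simp
  | succ j ih =>
    have hne : (j : ZMod n) + 1 ≠ 0 := by
      intro h
      have h' : ((j + 1 : ℕ) : ZMod n) = 0 := by simpa using h
      rw [ZMod.natCast_eq_zero_iff] at h'
      exact absurd (Nat.le_of_dvd (Nat.succ_pos _) h') (by omega)
    rw [pow_succ', map_mul, Equiv.Perm.mul_apply, ih (by omega)]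
    simp [edgeLabel, hne]

theorem coverAction_a_pow_self [NeZero n] (k : CoverGroup n) :
    coverAction n (a ^ n) (0, k) = (0, wrap n * k) := by
  obtain ⟨m, hm⟩ := Nat.exists_eq_succ_of_ne_zero (NeZero.ne n)
  have h0 : (m : ZMod n) + 1 = 0 := by
    have : ((m + 1 : ℕ) : ZMod n) = 0 := by rw [← Nat.succ_eq_add_one, ← hm]; simp
    simpa using this
  have hpow : (a : F2) ^ n = a * a ^ m := by rw [← pow_succ', ← Nat.succ_eq_add_one, ← hm]
  rw [hpow, map_mul, Equiv.Perm.mul_apply, coverAction_a_pow n (by omega)]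
  simp [edgeLabel, h0]

theorem coverAction_b_pow (j : ℕ) (x : ZMod n × CoverGroup n) :
    coverAction n (b ^ j) x = (x.1, FreeGroup.of (some x.1) ^ j * x.2) := by
  induction j with
  | zero => simp
  | succ j ih =>
    rw [pow_succ', map_mul, Equiv.Perm.mul_apply, ih]
    simp [pow_succ', mul_assoc]

theorem degreeHom_coverGen (k : CoverGroup n) : degreeHom n (coverGen n k) = 1 := by
  have : (degreeHom n).comp (coverGen n) = 1 := by
    ext s
    rcases s with _ | i
    · simp [coverGen, ← ofAdd_nsmul]
    · simp [coverGen]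
  exact DFunLike.congr_fun this k

theorem coverAction_zero_fst (w : (degreeHom n).ker) (k : CoverGroup n) :
    (coverAction n w (0, k)).1 = 0 := by
  rw [coverAction_fst, (MonoidHom.mem_ker).1 w.2]
  simp

/-- Reading off the `CoverGroup n`-coordinate of the translate of the base point. -/
def coverCoord : (degreeHom n).ker →* CoverGroup n where
  toFun w := (coverAction n w (0, 1)).2
  map_one' := by simp
  map_mul' v w := by
    have h1 : coverAction n w (0, 1) = (0, (coverAction n w (0, 1)).2) :=
      Prod.ext (coverAction_zero_fst n w 1) rfl
    have h2 := coverAction_mul_right n v (0, 1) (coverAction n w (0, 1)).2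
    simp only [one_mul] at h2
    rw [Subgroup.coe_mul, map_mul, Equiv.Perm.mul_apply, h1, h2]

/-- `coverGen` as a hom into the kernel of `degreeHom n`. -/
def coverGenKer : CoverGroup n →* (degreeHom n).ker :=
  (coverGen n).codRestrict _ fun k => (degreeHom_coverGen n k)

theorem coverCoord_coverGenKer [NeZero n] (k : CoverGroup n) :
    coverCoord n (coverGenKer n k) = k := by
  have : (coverCoord n).comp (coverGenKer n) = MonoidHom.id _ := by
    ext s
    change (coverAction n (coverGen n (FreeGroup.of s)) (0, 1)).2 = FreeGroup.of s
    rcases s with _ | i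
    · simp only [coverGen, FreeGroup.lift_apply_of]
      rw [map_mul, Equiv.Perm.mul_apply, coverAction_b_pow, coverAction_a_pow_self]
      simp [wrap]
    · simp only [coverGen, FreeGroup.lift_apply_of]
      have hi := coverAction_a_pow n (ZMod.val_lt i)
      simp only [ZMod.natCast_val, ZMod.cast_id', id_eq] at hi
      have : (coverAction n (a ^ i.val))⁻¹ (i, FreeGroup.of (some i)) =
          (0, FreeGroup.of (some i)) := by
        rw [Equiv.Perm.inv_eq_iff_eq, hi]
      rw [map_mul, map_mul, Equiv.Perm.mul_apply, Equiv.Perm.mul_apply, hi, coverAction_b,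
        map_inv, mul_one, this]
  exact DFunLike.congr_fun this k

theorem coverGenKer_coverCoord [NeZero n] (w : (degreeHom n).ker) :
    coverGenKer n (coverCoord n w) = w := by
  apply Subtype.ext
  have h := coverGen_coverAction n w (0, 1)
  rw [coverAction_zero_fst] at h
  simp only [ZMod.val_zero, pow_zero, one_mul, map_one, mul_one] at h
  exact h

/-- The basis of the kernel of `degreeHom n` given by `a ^ n * b ^ n` and the conjugates of `b`. -/
def coverBasis [NeZero n] : FreeGroupBasis (Option (ZMod n)) (degreeHom n).ker :=
  FreeGroupBasis.ofRepr
    { coverCoord n with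
      invFun := coverGenKer n
      left_inv := coverGenKer_coverCoord n
      right_inv := coverCoord_coverGenKer n }

theorem exists_finiteIndex_primitive (hn : n ≠ 0) :
    ∃ H : Subgroup F2, 0 < H.index ∧
      ∃ hg : a ^ n * b ^ n ∈ H, Primitive (⟨a ^ n * b ^ n, hg⟩ : H) := by
  have : NeZero n := ⟨hn⟩
  have hgen : coverGen n (FreeGroup.of none) = a ^ n * b ^ n := by simp [coverGen]
  refine ⟨(degreeHom n).ker, ?_, ?_, Option (ZMod n), coverBasis n, none, ?_⟩
  · have : Finite (Multiplicative (ZMod n)) := inferInstanceAs (Finite (ZMod n))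
    rw [Subgroup.index_ker]
    exact Nat.card_pos
  · rw [← hgen]
    exact degreeHom_coverGen n _
  · apply Subtype.ext
    exact hgen

end CyclicCover

/-! ### Subgroups of small index -/

/-- An affine bijection of `ℂ` whose linear part is a nontrivial `p`-th root of unity has trivial
`p`-th power. -/
theorem affine_pow_eq_one {σ : Equiv.Perm ℂ} {u : ℂ}
    (hσ : ∀ z w, σ z - σ w = u * (z - w)) (hu : u ≠ 1) {p : ℕ} (hp : u ^ p = 1) :
    σ ^ p = 1 := by
  have hu' : 1 - u ≠ 0 := sub_ne_zero.2 hu.symm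
  obtain ⟨c, hc⟩ : ∃ c, σ c = c := by
    refine ⟨σ 0 / (1 - u), ?_⟩
    have h := hσ (σ 0 / (1 - u)) 0
    rw [sub_zero, sub_eq_iff_eq_add] at h
    rw [h]
    field_simp
    ring
  have hpow : ∀ (j : ℕ) (z : ℂ), (σ ^ j) z - c = u ^ j * (z - c) := by
    intro j
    induction j with
    | zero => simp
    | succ j ih =>
      intro z
      have h := hσ ((σ ^ j) z) c
      rw [hc, ih] at h
      rw [pow_succ', Equiv.Perm.mul_apply, h]
      ring
  ext z
  have h := hpow p z
  rw [hp, one_mul] at h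
  simpa using h

/-- Any character of a free group lifts to an action by affine maps of `ℂ` that moves a given
basis element in the kernel nontrivially. -/
theorem exists_affine_action {G ι : Type*} [Group G] (bas : FreeGroupBasis ι G) (i : ι)
    (χ : G →* ℂˣ) (hχ : χ (bas i) = 1) :
    ∃ φ : G →* Equiv.Perm ℂ, φ (bas i) ≠ 1 ∧
      ∀ h z w, φ h z - φ h w = χ h * (z - w) := by
  classical
  let S : Subgroup (ℂˣ × Equiv.Perm ℂ) :=
    { carrier := {q | ∀ z w, q.2 z - q.2 w = q.1 * (z - w)}
      one_mem' := by simp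
      mul_mem' := by
        intro q r hq hr z w
        simp only [Prod.snd_mul, Prod.fst_mul, Equiv.Perm.mul_apply, Units.val_mul]
        rw [hq, hr]
        ring
      inv_mem' := by
        intro q hq z w
        have h := hq (q.2⁻¹ z) (q.2⁻¹ w)
        simp only [perm_apply_inv_apply] at h
        simp only [Prod.snd_inv, Prod.fst_inv]
        rw [h, ← mul_assoc, Units.inv_mul, one_mul] }
  let f : ι → S := fun j =>
    if hj : j = i then ⟨(1, Equiv.addRight 1), by intro z w; simp⟩
    else ⟨(χ (bas j), MulAction.toPerm (χ (bas j))), by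
      intro z w
      simp [Units.smul_def, mul_sub]⟩
  let F : G →* S := bas.lift f
  have hF : ∀ j, F (bas j) = f j := fun j => by simp [F]
  have hfst : (MonoidHom.fst _ _).comp (S.subtype.comp F) = χ := by
    apply bas.ext_hom
    intro j
    simp only [MonoidHom.comp_apply, hF]
    by_cases hj : j = i
    · subst hj
      simp [f, hχ]
    · simp [f, hj]
  refine ⟨(MonoidHom.snd _ _).comp (S.subtype.comp F), ?_, ?_⟩
  · intro h
    have h0 := Equiv.congr_fun h 0
    simp [hF, f] at h0
  · intro h z w
    rw [← hfst]
    exact (F h).2 z w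

/-- `a ^ n * b ^ n` is not primitive in a subgroup `H` as soon as proper divisor powers
of `a` and of `b` lie in `H`. -/
theorem not_primitive_of_pow_mem {n k l : ℕ} {H : Subgroup F2} (hkn : k < n) (hln : l < n)
    (hk : k ≠ 0) (hl : l ≠ 0) (hkd : k ∣ n) (hld : l ∣ n) (hak : a ^ k ∈ H) (hbl : b ^ l ∈ H)
    (hg : a ^ n * b ^ n ∈ H) : ¬ Primitive (⟨a ^ n * b ^ n, hg⟩ : H) := by
  rintro ⟨ι, bas, i, hi⟩
  have hn : n ≠ 0 := by omega
  obtain ⟨ζ, hζ⟩ : ∃ ζ : ℂˣ, IsPrimitiveRoot ζ n :=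
    ⟨_, (Complex.isPrimitiveRoot_exp n hn).isUnit_unit hn⟩
  let χ₀ : F2 →* ℂˣ := FreeGroup.lift fun _ => ζ
  have hχa : χ₀ a = ζ := by simp [χ₀, a]
  have hχb : χ₀ b = ζ := by simp [χ₀, b]
  obtain ⟨φ, hφ, hφχ⟩ := exists_affine_action bas i (χ₀.comp H.subtype) (by
    simp [hi, hχa, hχb, hζ.pow_eq_one])
  have key : ∀ (s : F2) (j : ℕ) (hs : s ^ j ∈ H), χ₀ s = ζ → j < n → j ≠ 0 → j ∣ n →
      φ ⟨s ^ j, hs⟩ ^ (n / j) = 1 := by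
    intro s j hs hχ hjn hj hjd
    refine affine_pow_eq_one (hφχ _) ?_ ?_
    · simpa [hχ] using fun h => hζ.pow_ne_one_of_pos_of_lt hj hjn (Units.ext (by simpa using h))
    · have : (ζ ^ j) ^ (n / j) = 1 := by
        rw [← pow_mul, Nat.mul_div_cancel' hjd, hζ.pow_eq_one]
      simpa [hχ] using congrArg Units.val this
  have hprod : bas i = (⟨a ^ k, hak⟩ : H) ^ (n / k) * (⟨b ^ l, hbl⟩ : H) ^ (n / l) := by
    rw [hi]
    apply Subtype.ext
    simp [← pow_mul, Nat.mul_div_cancel' hkd, Nat.mul_div_cancel' hld]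
  apply hφ
  rw [hprod, map_mul, map_pow, map_pow, key a k hak hχa hkn hk hkd, key b l hbl hχb hln hl hld,
    mul_one]

theorem smallestNonDivisor_lt {n : ℕ} (hn : 3 ≤ n) : smallestNonDivisor n < n := by
  have h : n - 1 ∈ {d : ℕ | 2 ≤ d ∧ ¬ d ∣ n} := by
    refine ⟨by omega, fun hd => ?_⟩
    have h1 : n - 1 ∣ n - (n - 1) := Nat.dvd_sub hd dvd_rfl
    have := Nat.le_of_dvd (by omega) h1
    omega
  have := Nat.sInf_le h
  unfold smallestNonDivisor
  omega

theorem dvd_of_lt_smallestNonDivisor {n k : ℕ} (hk : k ≠ 0) (hlt : k < smallestNonDivisor n) :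
    k ∣ n := by
  by_contra h
  have hk1 : k ≠ 1 := by
    rintro rfl
    exact h (one_dvd n)
  exact Nat.notMem_of_lt_sInf hlt ⟨by omega, h⟩

theorem smallestNonDivisor_le_dPrim {n : ℕ} (hn : 3 ≤ n) :
    smallestNonDivisor n ≤ dPrim (a ^ n * b ^ n) := by
  obtain ⟨H₀, hpos, hH₀⟩ := exists_finiteIndex_primitive n (by omega)
  refine le_csInf ⟨H₀.index, hpos, H₀, rfl, hH₀⟩ ?_
  rintro m ⟨hm, H, rfl, hg, hprim⟩
  by_contra! hlt
  obtain ⟨k, hk0, hk, hak⟩ := H.exists_pow_mem_of_index_ne_zero hm.ne' a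
  obtain ⟨l, hl0, hl, hbl⟩ := H.exists_pow_mem_of_index_ne_zero hm.ne' b
  have hd := smallestNonDivisor_lt hn
  exact not_primitive_of_pow_mem (by omega) (by omega) (by omega) (by omega)
    (dvd_of_lt_smallestNonDivisor (by omega) (by omega))
    (dvd_of_lt_smallestNonDivisor (by omega) (by omega)) hak hbl hg hprim

theorem dPrim_ge_smallestNonDivisor (i : ℕ) (hi : 3 ≤ i)
    (n : ℕ) (hn : n = (Finset.Icc 1 i).lcm id) :
    i + 1 ≤ smallestNonDivisor n ∧
      smallestNonDivisor n ≤ dPrim (a ^ n * b ^ n) := by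
  have hdvd : ∀ d, 1 ≤ d → d ≤ i → d ∣ n := by
    intro d h1 h2
    rw [hn]
    exact Finset.dvd_lcm (f := id) (Finset.mem_Icc.2 ⟨h1, h2⟩)
  have hn0 : n ≠ 0 := by
    rw [hn, Ne, Finset.lcm_eq_zero_iff]
    simp
  have hn3 : 3 ≤ n := Nat.le_of_dvd (Nat.pos_of_ne_zero hn0) (hdvd 3 (by omega) hi)
  refine ⟨le_csInf ⟨n + 1, by omega, fun h => ?_⟩ ?_, smallestNonDivisor_le_dPrim hn3⟩
  · have := Nat.le_of_dvd (Nat.pos_of_ne_zero hn0) h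
    omega
  · rintro d ⟨hd2, hd⟩
    by_contra! hlt
    exact hd (hdvd d (by omega) (by omega))
end
end
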